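/- arXiv:1009.4517 — 2 statements merged into one kernel-verified Lean document; each statement's English description precedes it below -/
import Mathlib

section
/- Let P be a simple polygon and let p, q be two points in the closed region bounded by P. The shortest path from p to q inside P bends only at reflex vertices of P. -/
/-- The Euclidean plane. -/
abbrev Pt := EuclideanSpace ℝ (Fin 2)

/-- A simple polygon, given by its cyclic sequence of vertices; consecutive
vertices are joined by straight edges, and two distinct edges meet only in
shared endpoints. -/
structure SimplePolygon where
  n : ℕ
  three_le : 3 ≤ n
  vtx : ZMod n → Pt
  inj : Function.Injective vtx
  edges_meet : ∀ i j : ZMod n, i ≠ j →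
    segment ℝ (vtx i) (vtx (i + 1)) ∩ segment ℝ (vtx j) (vtx (j + 1)) ⊆
      ({vtx i, vtx (i + 1)} : Set Pt) ∩ ({vtx j, vtx (j + 1)} : Set Pt)

namespace SimplePolygon

/-- The boundary of the polygon: the union of its edges. -/
def boundary (P : SimplePolygon) : Set Pt :=
  ⋃ i : ZMod P.n, segment ℝ (P.vtx i) (P.vtx (i + 1))

/-- The closed region bounded by the polygon: the boundary together with the
bounded connected components of its complement. -/
def region (P : SimplePolygon) : Set Pt :=
  P.boundary ∪
    {x : Pt | x ∉ P.boundary ∧ Bornology.IsBounded (connectedComponentIn P.boundaryᶜ x)}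

/-- `x` is a reflex vertex of `P`: it is a vertex at which the region is
locally non-convex (interior angle exceeding `π`). -/
def IsReflexVertex (P : SimplePolygon) (x : Pt) : Prop :=
  (∃ i : ZMod P.n, x = P.vtx i) ∧ ∀ ε > (0 : ℝ), ¬ Convex ℝ (Metric.ball x ε ∩ P.region)

end SimplePolygon

/-- The length of the polygonal path through the points `f 0, …, f k`. -/
noncomputable def polyLength {k : ℕ} (f : Fin (k + 1) → Pt) : ℝ :=
  ∑ i : Fin k, dist (f i.castSucc) (f i.succ)

/-- The point set (track) of the polygonal path through `f 0, …, f k`. -/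
def polyTrack {k : ℕ} (f : Fin (k + 1) → Pt) : Set Pt :=
  ⋃ i : Fin k, segment ℝ (f i.castSucc) (f i.succ)

/-- `f` is a geodesic (shortest polygonal path) from `p` to `q` inside the
region of the polygon `P`. -/
def IsGeodesic (P : SimplePolygon) (p q : Pt) {k : ℕ} (f : Fin (k + 1) → Pt) : Prop :=
  f 0 = p ∧ f (Fin.last k) = q ∧ polyTrack f ⊆ P.region ∧
    ∀ (k' : ℕ) (g : Fin (k' + 1) → Pt), g 0 = p → g (Fin.last k') = q →
      polyTrack g ⊆ P.region → polyLength f ≤ polyLength g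

/-!
Near a point that is not a vertex, the boundary is either empty or a straight line, and each of the
two open sides of that line lies entirely inside or entirely outside the region. Hence the region is
locally convex there. At a bend where the region is locally convex, the corner can be cut: joining
two points of the adjacent edges close to the bend gives a strictly shorter path inside the region.
-/

open Filter Topology

section LocalConvexity

/-- `S` is locally convex at `x` if its intersection with some ball around `x` is convex. The point
`x` need not lie in `S`. -/
def LocallyConvexAt {E : Type*} [PseudoMetricSpace E] [AddCommMonoid E] [Module ℝ E]
    (S : Set E) (x : E) : Prop :=
  ∃ ε > 0, Convex ℝ (Metric.ball x ε ∩ S)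

theorem convex_inter_of_subset_or_disjoint_sides {𝕜 E β : Type*} [Semiring 𝕜] [PartialOrder 𝕜]
    [AddCommMonoid E] [Module 𝕜 E] [AddCommMonoid β] [LinearOrder β] [IsOrderedAddMonoid β]
    [Module 𝕜 β] [PosSMulMono 𝕜 β] {B S : Set E} (hB : Convex 𝕜 B) (ℓ : E →ₗ[𝕜] β) (c : β)
    (heq : B ∩ {y | ℓ y = c} ⊆ S)
    (hlt : B ∩ {y | ℓ y < c} ⊆ S ∨ Disjoint (B ∩ {y | ℓ y < c}) S)
    (hgt : B ∩ {y | c < ℓ y} ⊆ S ∨ Disjoint (B ∩ {y | c < ℓ y}) S) :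
    Convex 𝕜 (B ∩ S) := by
  have hsplit (y : E) := lt_trichotomy (ℓ y) c
  simp only [Set.disjoint_left, Set.subset_def, Set.mem_inter_iff, Set.mem_ofPred_eq]
    at heq hlt hgt
  rcases hlt with hlt | hlt <;> rcases hgt with hgt | hgt
  · have : B ∩ S = B := by ext y; grind
    rwa [this]
  · have : B ∩ S = B ∩ {y | ℓ y ≤ c} := by ext y; grind
    exact this ▸ hB.inter (convex_halfSpace_le ℓ.isLinear c)
  · have : B ∩ S = B ∩ {y | c ≤ ℓ y} := by ext y; grind
    exact this ▸ hB.inter (convex_halfSpace_ge ℓ.isLinear c)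
  · have : B ∩ S = B ∩ {y | ℓ y = c} := by ext y; grind
    exact this ▸ hB.inter (convex_hyperplane ℓ.isLinear c)

end LocalConvexity

section Lines

theorem exists_dual_ker_eq_span_singleton {K V : Type*} [Field K] [AddCommGroup V] [Module K V]
    (hV : Module.finrank K V = 2) {v : V} (hv : v ≠ 0) :
    ∃ ℓ : Module.Dual K V, ℓ.ker = K ∙ v := by
  have : FiniteDimensional K V := Module.finite_of_finrank_eq_succ hV
  have hspan : Module.finrank K (K ∙ v) = 1 := finrank_span_singleton hv
  have hlt : K ∙ v < ⊤ := Submodule.lt_top_of_finrank_lt_finrank (by omega)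
  obtain ⟨ℓ, hℓ, hle⟩ := Submodule.exists_le_ker_of_lt_top _ hlt
  have hker := Module.Dual.finrank_ker_add_one_of_ne_zero hℓ
  exact ⟨ℓ, (Submodule.eq_of_le_of_finrank_eq hle (by omega)).symm⟩

theorem exists_dual_mem_line_iff {K V : Type*} [Field K] [AddCommGroup V] [Module K V]
    (hV : Module.finrank K V = 2) {a b : V} (hab : a ≠ b) :
    ∃ (ℓ : Module.Dual K V) (c : K), ∀ y, y ∈ line[K, a, b] ↔ ℓ y = c := by
  obtain ⟨ℓ, hℓ⟩ := exists_dual_ker_eq_span_singleton hV (sub_ne_zero.2 hab.symm)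
  refine ⟨ℓ, ℓ a, fun y => ?_⟩
  have ha : a ∈ line[K, a, b] := left_mem_affineSpan_pair K a b
  rw [← AffineSubspace.vsub_right_mem_direction_iff_mem ha, direction_affineSpan,
    vectorSpan_pair_rev, ← sub_eq_zero, ← map_sub, ← LinearMap.mem_ker, hℓ, vsub_eq_sub,
    vsub_eq_sub]

theorem eventually_mem_segment_iff_mem_line {E : Type*} [AddCommGroup E] [TopologicalSpace E]
    [IsTopologicalAddGroup E] [Module ℝ E] [SeparatingDual ℝ E] {a b x : E}
    (hx : x ∈ openSegment ℝ a b) :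
    ∀ᶠ y in 𝓝 x, y ∈ segment ℝ a b ↔ y ∈ line[ℝ, a, b] := by
  rcases eq_or_ne a b with rfl | hab
  · simp
  obtain ⟨g, hg⟩ := SeparatingDual.exists_eq_one (R := ℝ) (sub_ne_zero.2 hab.symm)
  have hcoord (r : ℝ) : g (AffineMap.lineMap a b r - a) = r := by
    simp [AffineMap.lineMap_apply, hg]
  have hnear : ∀ᶠ y in 𝓝 x, g (y - a) ∈ Set.Ioo 0 1 := by
    refine (by fun_prop : Continuous fun y => g (y - a)).continuousAt.eventually_mem
      (isOpen_Ioo.mem_nhds ?_)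
    rw [openSegment_eq_image_lineMap] at hx
    obtain ⟨s, hs, rfl⟩ := hx
    rwa [hcoord]
  filter_upwards [hnear] with y hy
  rw [segment_eq_image_lineMap, mem_affineSpan_pair_iff_exists_lineMap_eq]
  constructor
  · rintro ⟨r, -, rfl⟩
    exact ⟨r, rfl⟩
  · rintro ⟨r, rfl⟩
    rw [hcoord] at hy
    exact ⟨r, Set.Ioo_subset_Icc_self hy, rfl⟩

end Lines

namespace SimplePolygon

variable {P : SimplePolygon} {x : Pt}

/-- The `i`-th edge of the polygon, from the `i`-th vertex to the next one. -/
def edge (P : SimplePolygon) (i : ZMod P.n) : Set Pt :=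
  segment ℝ (P.vtx i) (P.vtx (i + 1))

theorem mem_boundary_iff : x ∈ P.boundary ↔ ∃ i, x ∈ P.edge i :=
  Set.mem_iUnion

theorem boundary_subset_region (P : SimplePolygon) : P.boundary ⊆ P.region :=
  Set.subset_union_left

theorem vtx_ne_vtx_add_one (P : SimplePolygon) (i : ZMod P.n) : P.vtx i ≠ P.vtx (i + 1) := by
  have : Fact (1 < P.n) := ⟨by have := P.three_le; omega⟩
  exact P.inj.ne (by simp)

theorem eventually_mem_edge_imp (P : SimplePolygon) (x : Pt) :
    ∀ᶠ y in 𝓝 x, ∀ i, y ∈ P.edge i → x ∈ P.edge i := by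
  have : NeZero P.n := ⟨by have := P.three_le; omega⟩
  have hclosed (i : ZMod P.n) : IsClosed (P.edge i) := by
    rw [edge, segment_eq_image_lineMap]
    exact (isCompact_Icc.image (by fun_prop)).isClosed
  exact (locallyFinite_of_finite P.edge).eventually_subset hclosed x

theorem mem_openSegment_of_mem_edge {i : ZMod P.n} (hi : x ∈ P.edge i)
    (hx : ∀ j, x ≠ P.vtx j) : x ∈ openSegment ℝ (P.vtx i) (P.vtx (i + 1)) :=
  mem_openSegment_of_ne_left_right (hx i).symm (hx (i + 1)).symm hi

theorem eq_of_mem_edge_of_mem_edge {i j : ZMod P.n} (hi : x ∈ P.edge i) (hj : x ∈ P.edge j)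
    (hx : ∀ k, x ≠ P.vtx k) : i = j := by
  by_contra hij
  rcases (P.edges_meet i j hij ⟨hi, hj⟩).1 with h | h
  · exact hx i h
  · exact hx (i + 1) h

theorem eventually_mem_boundary_iff_mem_line {i : ZMod P.n} (hi : x ∈ P.edge i)
    (hx : ∀ j, x ≠ P.vtx j) :
    ∀ᶠ y in 𝓝 x, y ∈ P.boundary ↔ y ∈ line[ℝ, P.vtx i, P.vtx (i + 1)] := by
  filter_upwards [P.eventually_mem_edge_imp x, eventually_mem_segment_iff_mem_line
    (mem_openSegment_of_mem_edge hi hx)] with y hedge hline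
  rw [← hline, mem_boundary_iff]
  constructor
  · rintro ⟨j, hj⟩
    rwa [eq_of_mem_edge_of_mem_edge hi (hedge j hj) hx]
  · exact fun h => ⟨i, h⟩

theorem subset_region_or_disjoint_region {T : Set Pt} (hT : IsPreconnected T)
    (hd : Disjoint T P.boundary) : T ⊆ P.region ∨ Disjoint T P.region := by
  rw [or_iff_not_imp_right, Set.not_disjoint_iff]
  rintro ⟨z, hzT, hz⟩ y hyT
  have hTc : T ⊆ P.boundaryᶜ := Set.subset_compl_iff_disjoint_right.2 hd
  obtain hz | ⟨-, hbounded⟩ := hz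
  · exact absurd hz (hTc hzT)
  · have hy : y ∈ connectedComponentIn P.boundaryᶜ z := hT.subset_connectedComponentIn hzT hTc hyT
    exact Or.inr ⟨hTc hyT, connectedComponentIn_eq hy ▸ hbounded⟩

theorem locallyConvexAt_region_of_eventually_mem_boundary_iff {ℓ : Module.Dual ℝ Pt} {c : ℝ}
    (h : ∀ᶠ y in 𝓝 x, y ∈ P.boundary ↔ ℓ y = c) : LocallyConvexAt P.region x := by
  obtain ⟨ε, hε, hball⟩ := Metric.eventually_nhds_iff_ball.1 h
  have hB : Convex ℝ (Metric.ball x ε) := convex_ball x ε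
  refine ⟨ε, hε, convex_inter_of_subset_or_disjoint_sides hB ℓ c ?_ ?_ ?_⟩
  · exact fun y hy => P.boundary_subset_region ((hball y hy.1).2 hy.2)
  · exact subset_region_or_disjoint_region
      (hB.inter (convex_halfSpace_lt ℓ.isLinear c)).isPreconnected
      (Set.disjoint_left.2 fun y hy hyb => hy.2.ne ((hball y hy.1).1 hyb))
  · exact subset_region_or_disjoint_region
      (hB.inter (convex_halfSpace_gt ℓ.isLinear c)).isPreconnected
      (Set.disjoint_left.2 fun y hy hyb => hy.2.ne' ((hball y hy.1).1 hyb))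

theorem locallyConvexAt_region_of_ne_vtx (hx : ∀ i, x ≠ P.vtx i) :
    LocallyConvexAt P.region x := by
  by_cases hb : x ∈ P.boundary
  · obtain ⟨i, hi⟩ := mem_boundary_iff.1 hb
    obtain ⟨ℓ, c, hline⟩ := exists_dual_mem_line_iff (K := ℝ) (by simp) (P.vtx_ne_vtx_add_one i)
    apply locallyConvexAt_region_of_eventually_mem_boundary_iff (ℓ := ℓ) (c := c)
    simpa only [hline] using eventually_mem_boundary_iff_mem_line hi hx
  · -- Locally the boundary is empty, which is the degenerate line `0 = 1`.
    apply locallyConvexAt_region_of_eventually_mem_boundary_iff (ℓ := 0) (c := 1)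
    filter_upwards [P.eventually_mem_edge_imp x] with y hy
    simp only [mem_boundary_iff, LinearMap.zero_apply, zero_ne_one, iff_false] at hb ⊢
    exact fun ⟨i, hi⟩ => hb ⟨i, hy i hi⟩

end SimplePolygon

section CornerCutting

variable {E : Type*} [NormedAddCommGroup E] [NormedSpace ℝ E] [StrictConvexSpace ℝ E]

theorem dist_corner_cut_lt {A x B : E} (hx : x ∉ segment ℝ A B) {t : ℝ}
    (ht : t ∈ Set.Ioc 0 1) :
    dist A (AffineMap.lineMap x A t) +
        (dist (AffineMap.lineMap x A t) (AffineMap.lineMap x B t) +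
          dist (AffineMap.lineMap x B t) B) <
      dist A x + dist x B := by
  have hAB : dist A B < dist A x + dist x B :=
    (dist_triangle A x B).lt_of_ne fun h => hx <|
      mem_segment_iff_wbtw.2 (dist_add_dist_eq_iff.1 h.symm)
  have hscale : dist (AffineMap.lineMap x A t) (AffineMap.lineMap x B t) = t * dist A B := by
    simp [← AffineMap.homothety_eq_lineMap, AffineMap.homothety_apply, dist_smul₀, abs_of_pos ht.1]
  rw [hscale, dist_comm A, dist_lineMap_right, dist_lineMap_right,
    Real.norm_of_nonneg (sub_nonneg.2 ht.2), dist_comm x A]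
  linarith [mul_lt_mul_of_pos_left hAB ht.1]

theorem LocallyConvexAt.exists_corner_cut {S : Set E} {A x B : E}
    (hS : LocallyConvexAt S x) (hA : segment ℝ A x ⊆ S) (hB : segment ℝ x B ⊆ S)
    (hx : x ∉ segment ℝ A B) :
    ∃ a b, segment ℝ A a ⊆ S ∧ segment ℝ a b ⊆ S ∧ segment ℝ b B ⊆ S ∧
      dist A a + (dist a b + dist b B) < dist A x + dist x B := by
  obtain ⟨ε, hε, hconv⟩ := hS
  have hnear (C : E) : ∀ᶠ t : ℝ in 𝓝[>] 0, AffineMap.lineMap x C t ∈ Metric.ball x ε := by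
    have : Tendsto (AffineMap.lineMap x C) (𝓝 (0 : ℝ)) (𝓝 x) :=
      AffineMap.lineMap_continuous.tendsto' _ _ (AffineMap.lineMap_apply_zero x C)
    exact (this.eventually_mem (Metric.ball_mem_nhds x hε)).filter_mono nhdsWithin_le_nhds
  obtain ⟨t, haε, hbε, ht⟩ := ((hnear A).and ((hnear B).and (Ioc_mem_nhdsGT one_pos))).exists
  have ha : AffineMap.lineMap x A t ∈ segment ℝ A x := by
    rw [segment_symm, segment_eq_image_lineMap]
    exact ⟨t, Set.Ioc_subset_Icc_self ht, rfl⟩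
  have hb : AffineMap.lineMap x B t ∈ segment ℝ x B := by
    rw [segment_eq_image_lineMap]
    exact ⟨t, Set.Ioc_subset_Icc_self ht, rfl⟩
  refine ⟨AffineMap.lineMap x A t, AffineMap.lineMap x B t, ?_, ?_, ?_, dist_corner_cut_lt hx ht⟩
  · exact ((convex_segment A x).segment_subset (left_mem_segment ℝ A x) ha).trans hA
  · exact (hconv.segment_subset ⟨haε, hA ha⟩ ⟨hbε, hB hb⟩).trans Set.inter_subset_right
  · exact ((convex_segment x B).segment_subset hb (right_mem_segment ℝ x B)).trans hB

end CornerCutting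

section Chains

/-- The length of the polygonal path through the points of a list. Lists, unlike families indexed by
`Fin (k + 1)`, can be spliced without reindexing. -/
def chainLength {E : Type*} [PseudoMetricSpace E] : List E → ℝ
  | [] => 0
  | [_] => 0
  | a :: b :: l => dist a b + chainLength (b :: l)

theorem chainLength_append_cons {E : Type*} [PseudoMetricSpace E] (a : E) (l₂ : List E) :
    ∀ l₁, chainLength (l₁ ++ a :: l₂) = chainLength (l₁ ++ [a]) + chainLength (a :: l₂)
  | [] => by simp [chainLength]
  | [b] => by simp [chainLength]
  | b :: c :: l₁ => by
    have := chainLength_append_cons a l₂ (c :: l₁)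
    simp only [List.cons_append, chainLength] at this ⊢
    rw [this, add_assoc]

theorem LocallyConvexAt.exists_shorter_chain {E : Type*} [NormedAddCommGroup E] [NormedSpace ℝ E]
    [StrictConvexSpace ℝ E] {S : Set E} {A x B : E} {l₁ l₂ : List E} (hS : LocallyConvexAt S x)
    (hl : (l₁ ++ A :: x :: B :: l₂).IsChain (segment ℝ · · ⊆ S)) (hx : x ∉ segment ℝ A B) :
    ∃ a b, (l₁ ++ A :: a :: b :: B :: l₂).IsChain (segment ℝ · · ⊆ S) ∧
      chainLength (l₁ ++ A :: a :: b :: B :: l₂) < chainLength (l₁ ++ A :: x :: B :: l₂) := by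
  simp only [List.isChain_append_cons_cons, List.isChain_cons_cons] at hl
  obtain ⟨hl₁, hA, hB, hl₂⟩ := hl
  obtain ⟨a, b, hAa, hab, hbB, hlt⟩ := hS.exists_corner_cut hA hB hx
  refine ⟨a, b, ?_, ?_⟩
  · simp only [List.isChain_append_cons_cons, List.isChain_cons_cons]
    exact ⟨hl₁, hAa, hab, hbB, hl₂⟩
  · rw [chainLength_append_cons, chainLength_append_cons A (x :: B :: l₂)]
    simp only [chainLength]
    linarith

theorem chainLength_ofFn : ∀ {k : ℕ} (f : Fin (k + 1) → Pt),
    chainLength (List.ofFn f) = polyLength f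
  | 0, f => by simp [chainLength, polyLength]
  | k + 1, f => by
    have := chainLength_ofFn (Fin.tail f)
    simp only [List.ofFn_succ, chainLength, polyLength, Fin.tail, Fin.sum_univ_succ] at this ⊢
    rw [this]
    rfl

theorem head?_ofFn_succ {α : Type*} {k : ℕ} (f : Fin (k + 1) → α) :
    (List.ofFn f).head? = some (f 0) := by
  rw [List.ofFn_succ, List.head?_cons]

theorem getLast?_ofFn_succ {α : Type*} {k : ℕ} (f : Fin (k + 1) → α) :
    (List.ofFn f).getLast? = some (f (Fin.last k)) := by
  rw [List.ofFn_succ_last, List.getLast?_concat]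

theorem isChain_ofFn_iff_polyTrack_subset {k : ℕ} {f : Fin (k + 1) → Pt} {S : Set Pt} :
    (List.ofFn f).IsChain (segment ℝ · · ⊆ S) ↔ polyTrack f ⊆ S := by
  rw [List.isChain_ofFn, polyTrack, Set.iUnion_subset_iff]
  exact ⟨fun h i => h i (by omega), fun h i hi => h ⟨i, by omega⟩⟩

theorem exists_ofFn_eq_append_cons {α : Type*} {k : ℕ} (f : Fin (k + 1) → α) {i : ℕ} (h0 : 0 < i)
    (hk : i < k) :
    ∃ l₁ l₂, List.ofFn f =
      l₁ ++ f ⟨i - 1, by omega⟩ :: f ⟨i, by omega⟩ :: f ⟨i + 1, by omega⟩ :: l₂ := by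
  refine ⟨(List.ofFn f).take (i - 1), (List.ofFn f).drop (i + 2), ?_⟩
  obtain ⟨i, rfl⟩ := Nat.exists_eq_add_one.2 h0
  conv_lhs => rw [← List.take_append_drop i (List.ofFn f)]
  rw [List.drop_eq_getElem_cons (by grind), List.drop_eq_getElem_cons (by grind),
    List.drop_eq_getElem_cons (by grind)]
  simp [-List.ofFn_succ]

end Chains

namespace IsGeodesic

variable {P : SimplePolygon} {p q : Pt} {k : ℕ} {f : Fin (k + 1) → Pt}

theorem polyLength_le_chainLength (hf : IsGeodesic P p q f) {l : List Pt}
    (hhead : l.head? = some p) (hlast : l.getLast? = some q)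
    (hl : l.IsChain (segment ℝ · · ⊆ P.region)) : polyLength f ≤ chainLength l := by
  obtain ⟨k', g, rfl⟩ : ∃ (k' : ℕ) (g : Fin (k' + 1) → Pt), List.ofFn g = l := by
    cases l with
    | nil => simp at hhead
    | cons a l => exact ⟨l.length, (a :: l).get, List.ofFn_get _⟩
  rw [chainLength_ofFn]
  rw [head?_ofFn_succ, Option.some_inj] at hhead
  rw [getLast?_ofFn_succ, Option.some_inj] at hlast
  exact hf.2.2.2 k' g hhead hlast (isChain_ofFn_iff_polyTrack_subset.1 hl)

theorem not_locallyConvexAt (hf : IsGeodesic P p q f) {i : ℕ} (h0 : 0 < i) (hk : i < k)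
    (hbend : f ⟨i, by omega⟩ ∉ segment ℝ (f ⟨i - 1, by omega⟩) (f ⟨i + 1, by omega⟩)) :
    ¬ LocallyConvexAt P.region (f ⟨i, by omega⟩) := by
  intro hconv
  obtain ⟨l₁, l₂, hsplit⟩ := exists_ofFn_eq_append_cons f h0 hk
  have hhead : (List.ofFn f).head? = some p := by rw [head?_ofFn_succ, hf.1]
  have hlast : (List.ofFn f).getLast? = some q := by rw [getLast?_ofFn_succ, hf.2.1]
  have hchain := isChain_ofFn_iff_polyTrack_subset.2 hf.2.2.1
  have hlength := chainLength_ofFn f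
  rw [hsplit] at hhead hlast hchain hlength
  obtain ⟨a, b, hchain', hlt⟩ := hconv.exists_shorter_chain hchain hbend
  refine hlt.not_ge (hlength ▸ hf.polyLength_le_chainLength ?_ ?_ hchain')
  · simpa using hhead
  · simpa using hlast

end IsGeodesic

/-- The shortest path between two points inside a simple polygon bends only at
reflex vertices of the polygon: every interior breakpoint of the geodesic is a
reflex vertex. -/
theorem geodesic_bends_only_at_reflex_vertices (P : SimplePolygon) (p q : Pt)
    (hp : p ∈ P.region) (hq : q ∈ P.region) {k : ℕ} (f : Fin (k + 1) → Pt)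
    (hf : IsGeodesic P p q f) :
    ∀ (i : Fin (k + 1)) (h0 : 0 < i.val) (hk : i.val < k),
      f i ∉ segment ℝ (f ⟨i.val - 1, by omega⟩) (f ⟨i.val + 1, by omega⟩) →
      P.IsReflexVertex (f i) := by
  intro i h0 hk hbend
  have hnot : ¬ LocallyConvexAt P.region (f i) := hf.not_locallyConvexAt h0 hk hbend
  constructor
  · by_contra! hvtx
    exact hnot (SimplePolygon.locallyConvexAt_region_of_ne_vtx hvtx)
  · exact fun ε hε hconv => hnot ⟨ε, hε, hconv⟩
end

section
/- Let T be a tree each of whose internal nodes is labeled P or Q, with leaf set U, and let S ⊆ U. The projection of T to S (delete leaves not in S, recursively delete empty internal nodes, and contract internal nodes with a single child) represents exactly the restrictions to S of the linear orders represented by T: a permutation of S is a leaf-order of the projection iff it is the restriction to S of some leaf-order of T. -/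
/-- A PQ-tree: leaves carry elements, internal nodes are P-nodes or Q-nodes. -/
inductive PQTree (α : Type*) where
  | leaf : α → PQTree α
  | P : List (PQTree α) → PQTree α
  | Q : List (PQTree α) → PQTree α

namespace PQTree

/-- The leaves of a PQ-tree, in the tree's current (in-order) arrangement. -/
def leaves {α : Type*} : PQTree α → List α
  | .leaf a => [a]
  | .P cs => cs.attach.flatMap fun c => c.1.leaves
  | .Q cs => cs.attach.flatMap fun c => c.1.leaves
  decreasing_by all_goals (have := List.sizeOf_lt_of_mem c.2; simp only [PQTree.P.sizeOf_spec, PQTree.Q.sizeOf_spec]; omega)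

/-- The projection of a PQ-tree to a subset `S` of its leaves: delete all
leaves not in `S`, recursively delete internal nodes with no children, and
contract internal nodes with a single child.  Returns `none` if nothing
remains. -/
def proj {α : Type*} (S : Set α) [DecidablePred (· ∈ S)] : PQTree α → Option (PQTree α)
  | .leaf a => if a ∈ S then some (.leaf a) else none
  | .P cs =>
    match cs.attach.filterMap (fun c => c.1.proj S) with
    | [] => none
    | [t] => some t
    | ts => some (.P ts)
  | .Q cs =>
    match cs.attach.filterMap (fun c => c.1.proj S) with
    | [] => none
    | [t] => some t
    | ts => some (.Q ts)
  decreasing_by all_goals (have := List.sizeOf_lt_of_mem c.2; simp only [PQTree.P.sizeOf_spec, PQTree.Q.sizeOf_spec]; omega)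

end PQTree

/-- `IsLeafOrder T l`: `l` is a leaf-order of some PQ-tree equivalent to `T`
(children of P-nodes may be permuted arbitrarily; children of Q-nodes may be
reversed). -/
inductive IsLeafOrder {α : Type*} : PQTree α → List α → Prop
  | leaf (a : α) : IsLeafOrder (.leaf a) [a]
  | pnode (cs cs' : List (PQTree α)) (ls : List (List α)) :
      cs'.Perm cs → List.Forall₂ IsLeafOrder cs' ls → IsLeafOrder (.P cs) ls.flatten
  | qnode (cs : List (PQTree α)) (ls : List (List α)) :
      List.Forall₂ IsLeafOrder cs ls → IsLeafOrder (.Q cs) ls.flatten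
  | qnodeRev (cs : List (PQTree α)) (ls : List (List α)) :
      List.Forall₂ IsLeafOrder cs.reverse ls → IsLeafOrder (.Q cs) ls.flatten

/-! A list of trees has as its leaf-orders the product, in the semiring of languages, of the sets of
leaf-orders of its members. Restriction to `S` is an endomorphism of that semiring which also
preserves arbitrary unions, so it passes through both kinds of node to the children, where induction
applies. At a P-node, every permutation of the surviving children extends to a permutation of all
children. Deleted children contribute the unit `1 = {[]}`, and contracting a node with at most one
child does not change its leaf-orders. -/

section FilterMap

variable {β γ : Type*}

theorem exists_perm_filterMap_eq (f : β → Option γ) {bs : List β} {cs : List γ}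
    (h : cs.Perm (bs.filterMap f)) : ∃ bs' : List β, bs'.Perm bs ∧ bs'.filterMap f = cs := by
  induction bs generalizing cs with
  | nil => exact ⟨[], .refl _, by simpa using h.symm⟩
  | cons b bs ih =>
    cases hb : f b with
    | none =>
      rw [List.filterMap_cons_none hb] at h
      obtain ⟨bs', hperm, rfl⟩ := ih h
      exact ⟨b :: bs', hperm.cons b, List.filterMap_cons_none hb⟩
    | some c =>
      rw [List.filterMap_cons_some hb] at h
      obtain ⟨cs₁, cs₂, rfl⟩ := List.append_of_mem (h.symm.subset List.mem_cons_self)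
      obtain ⟨bs', hperm, hmap⟩ := ih (List.perm_middle.symm.trans h).cons_inv
      obtain ⟨bs₁, bs₂, rfl, rfl, rfl⟩ := List.filterMap_eq_append_iff.1 hmap
      exact ⟨bs₁ ++ b :: bs₂, List.perm_middle.trans (hperm.cons b), by
        simp only [List.filterMap_append, List.filterMap_cons_some hb]⟩

theorem iSup_perm_filterMap {L : Type*} [CompleteLattice L] (f : β → Option γ) (F : List γ → L)
    (bs : List β) :
    ⨆ (cs : List γ) (_ : cs.Perm (bs.filterMap f)), F cs =
      ⨆ (bs' : List β) (_ : bs'.Perm bs), F (bs'.filterMap f) := by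
  apply le_antisymm
  · refine iSup₂_le fun cs h => ?_
    obtain ⟨bs', hperm, rfl⟩ := exists_perm_filterMap_eq f h
    exact le_iSup₂_of_le bs' hperm le_rfl
  · exact iSup₂_le fun bs' hperm => le_iSup₂_of_le _ (hperm.filterMap f) le_rfl

theorem prod_map_option_elim {M : Type*} [Monoid M] (f : β → Option γ) (g : γ → M) (bs : List β) :
    (bs.map fun b => (f b).elim 1 g).prod = ((bs.filterMap f).map g).prod := by
  induction bs with
  | nil => rfl
  | cons b bs ih => cases hb : f b <;> simp [hb, ih]

end FilterMap

section FilterHom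

variable {α : Type*} (p : α → Bool)

/-- The endomorphism of the semiring of languages that restricts every word to its letters
satisfying `p`. -/
def filterHom : Language α →+* Language α where
  toFun L := List.filter p '' L
  map_zero' := Set.image_empty _
  map_one' := Set.image_singleton
  map_add' := Set.image_union _
  map_mul' _ _ := Set.image_image2_distrib fun _ _ => List.filter_append _ _

theorem mem_filterHom {L : Language α} {w : List α} :
    w ∈ filterHom p L ↔ ∃ v ∈ L, v.filter p = w :=
  Iff.rfl

theorem filterHom_iSup {ι : Sort*} (L : ι → Language α) :
    filterHom p (⨆ i, L i) = ⨆ i, filterHom p (L i) :=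
  Set.image_iUnion

end FilterHom

theorem mem_prod_map_iff_forall₂ {α β : Type*} (L : β → Language α) {bs : List β} {w : List α} :
    w ∈ (bs.map L).prod ↔
      ∃ ws : List (List α), List.Forall₂ (fun b v => v ∈ L b) bs ws ∧ w = ws.flatten := by
  induction bs generalizing w with
  | nil => simp
  | cons b bs ih =>
    simp only [List.map_cons, List.prod_cons, Language.mem_mul, ih, List.forall₂_cons_left_iff]
    constructor
    · rintro ⟨v, hv, _, ⟨ws, hws, rfl⟩, rfl⟩
      exact ⟨v :: ws, ⟨v, ws, hv, hws, rfl⟩, rfl⟩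
    · rintro ⟨_, ⟨v, ws, hv, hws, rfl⟩, rfl⟩
      exact ⟨v, hv, ws.flatten, ⟨ws, hws, rfl⟩, rfl⟩

namespace PQTree

variable {α : Type*}

@[elab_as_elim]
theorem induction_on_children {motive : PQTree α → Prop} (T : PQTree α)
    (leaf : ∀ a, motive (.leaf a))
    (P : ∀ cs : List (PQTree α), (∀ c ∈ cs, motive c) → motive (.P cs))
    (Q : ∀ cs : List (PQTree α), (∀ c ∈ cs, motive c) → motive (.Q cs)) : motive T :=
  match T with
  | .leaf a => leaf a
  | .P cs => P cs fun c _ => induction_on_children c leaf P Q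
  | .Q cs => Q cs fun c _ => induction_on_children c leaf P Q

/-- The set of leaf-orders of a PQ-tree. It is typed as a language so that the concatenations of
leaf-orders of several trees form a product. -/
def leafOrders (T : PQTree α) : Language α :=
  {l | IsLeafOrder T l}

theorem mem_leafOrders_leaf {a : α} {l : List α} : l ∈ (leaf a).leafOrders ↔ l = [a] :=
  ⟨fun | .leaf _ => rfl, fun h => h ▸ .leaf a⟩

theorem leafOrders_P (cs : List (PQTree α)) :
    (P cs).leafOrders = ⨆ (ds : List (PQTree α)) (_ : ds.Perm cs), (ds.map leafOrders).prod := by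
  ext l
  simp only [Language.mem_iSup, mem_prod_map_iff_forall₂]
  constructor
  · rintro (_ | ⟨_, ds, ls, hperm, hls⟩)
    exact ⟨ds, hperm, ls, hls, rfl⟩
  · rintro ⟨ds, hperm, ls, hls, rfl⟩
    exact .pnode cs ds ls hperm hls

theorem leafOrders_Q (cs : List (PQTree α)) :
    (Q cs).leafOrders = (cs.map leafOrders).prod + (cs.reverse.map leafOrders).prod := by
  ext l
  simp only [Language.mem_add, mem_prod_map_iff_forall₂]
  constructor
  · rintro (_ | _ | ⟨_, ls, hls⟩ | ⟨_, ls, hls⟩)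
    exacts [.inl ⟨ls, hls, rfl⟩, .inr ⟨ls, hls, rfl⟩]
  · rintro (⟨ls, hls, rfl⟩ | ⟨ls, hls, rfl⟩)
    exacts [.qnode cs ls hls, .qnodeRev cs ls hls]

section Proj

variable (S : Set α) [DecidablePred (· ∈ S)]

theorem elim_leafOrders_proj_P (cs : List (PQTree α)) :
    ((P cs).proj S).elim 1 leafOrders = (P (cs.filterMap (proj S))).leafOrders := by
  simp only [proj, List.filterMap_subtype, List.unattach_attach]
  split <;> simp [*, leafOrders_P]

theorem elim_leafOrders_proj_Q (cs : List (PQTree α)) :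
    ((Q cs).proj S).elim 1 leafOrders = (Q (cs.filterMap (proj S))).leafOrders := by
  simp only [proj, List.filterMap_subtype, List.unattach_attach]
  split <;> simp [*, leafOrders_Q]

theorem filterHom_prod_leafOrders {cs : List (PQTree α)}
    (h : ∀ c ∈ cs, filterHom (· ∈ S) c.leafOrders = (c.proj S).elim 1 leafOrders) :
    filterHom (· ∈ S) (cs.map leafOrders).prod =
      ((cs.filterMap (proj S)).map leafOrders).prod := by
  rw [map_list_prod, List.map_map, ← prod_map_option_elim]
  exact congrArg List.prod (List.map_congr_left h)

theorem filterHom_leafOrders (T : PQTree α) :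
    filterHom (· ∈ S) T.leafOrders = (T.proj S).elim 1 leafOrders := by
  induction T using induction_on_children with
  | leaf a =>
    ext l
    by_cases ha : a ∈ S <;> simp [proj, ha, mem_filterHom, mem_leafOrders_leaf, eq_comm]
  | P cs ih =>
    calc
      filterHom (· ∈ S) (P cs).leafOrders
      _ = ⨆ (ds : List (PQTree α)) (_ : ds.Perm cs),
            ((ds.filterMap (proj S)).map leafOrders).prod := by
          simp only [leafOrders_P, filterHom_iSup]
          exact iSup_congr fun ds => iSup_congr fun hperm =>
            filterHom_prod_leafOrders S fun c hc => ih c (hperm.subset hc)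
      _ = (P (cs.filterMap (proj S))).leafOrders := by
          rw [leafOrders_P, iSup_perm_filterMap]
      _ = ((P cs).proj S).elim 1 leafOrders := (elim_leafOrders_proj_P S cs).symm
  | Q cs ih =>
    have ih_reverse := fun c hc => ih c (List.mem_reverse.1 hc)
    rw [elim_leafOrders_proj_Q, leafOrders_Q, leafOrders_Q, map_add,
      filterHom_prod_leafOrders S ih, filterHom_prod_leafOrders S ih_reverse,
      List.filterMap_reverse]

end Proj

end PQTree

theorem proj_represents_restrictions_general {α : Type*} (T : PQTree α) (S : Set α)
    [DecidablePred (· ∈ S)] (l : List α) :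
    (∃ L : List α, IsLeafOrder T L ∧ l = L.filter fun a => decide (a ∈ S)) ↔
      (T.proj S).elim (l = []) fun T' => IsLeafOrder T' l := by
  have mem_iff : l ∈ filterHom (· ∈ S) T.leafOrders ↔ l ∈ (T.proj S).elim 1 PQTree.leafOrders := by
    rw [T.filterHom_leafOrders S]
  simp only [mem_filterHom, eq_comm (b := l)] at mem_iff
  refine mem_iff.trans ?_
  cases T.proj S <;> rfl

/-- The projection of a PQ-tree `T` to `S` represents exactly the restrictions
to `S` of the leaf-orders of `T`: a list `l` is the restriction to `S` of a
leaf-order of `T` iff it is a leaf-order of the projection (or the empty list,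
if the projection is empty). -/
theorem proj_represents_restrictions {α : Type*} [DecidableEq α]
    (T : PQTree α) (hnd : T.leaves.Nodup) (S : Set α) [DecidablePred (· ∈ S)]
    (l : List α) :
    (∃ L : List α, IsLeafOrder T L ∧ l = L.filter fun a => decide (a ∈ S)) ↔
      (match T.proj S with
        | some T' => IsLeafOrder T' l
        | none => l = []) := by
  rw [proj_represents_restrictions_general]
  cases T.proj S <;> rfl
end
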